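/- S(u(z)) generates conserved densities (equation (cq3)): Let U ⊆ ℝ^N be open with coordinates λ₁,…,λ_N, and let u, ξ₁,…,ξ_N, τ : U → ℂ be C² functions with τ taking values in the upper half-plane, such that ξ₁,…,ξ_N, τ satisfy the elliptic Gibbons–Tsarev system and u satisfies for every j the elliptic Löwner equation 4πi ∂u/∂λ_j = (−ζ₁(u+ξ_j, τ/2) + ζ₁(ξ_j, τ/2)) ∂τ/∂λ_j. Assume all theta-function values appearing in denominators (including S'(ξ_i,τ)) are nonzero on U, and define Γ_{ij} := −(1/(4πi))(S'(ξ_j,τ)/S'(ξ_i,τ)) S''(ξ_i−ξ_j,τ) ∂τ/∂λ_j for i ≠ j. Then for all i ≠ j: ∂/∂λ_i [ S'(ξ_j,τ) S'(u+ξ_j,τ) ∂τ/∂λ_j ] = Γ_{ij} · S'(ξ_i,τ) S'(u+ξ_i,τ) ∂τ/∂λ_i + Γ_{ji} · S'(ξ_j,τ) S'(u+ξ_j,τ) ∂τ/∂λ_j. (Since 4πi ∂_{λ_j} S(u) = S'(ξ_j,τ) S'(u+ξ_j,τ) ∂τ/∂λ_j, this says ∂²S(u)/∂λ_i∂λ_j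 = Γ_{ij} ∂S(u)/∂λ_i + Γ_{ji} ∂S(u)/∂λ_j.) -/

import Mathlib

open Complex

/-- Jacobi theta function θ₁(u,τ). -/
noncomputable def theta1 (u τ : ℂ) : ℂ :=
  -∑' k : ℤ, Complex.exp ((Real.pi : ℂ) * Complex.I * τ * ((k : ℂ) + 1/2)^2
      + 2 * (Real.pi : ℂ) * Complex.I * (u + 1/2) * ((k : ℂ) + 1/2))

/-- Jacobi theta function θ₂(u,τ). -/
noncomputable def theta2 (u τ : ℂ) : ℂ :=
  ∑' k : ℤ, Complex.exp ((Real.pi : ℂ) * Complex.I * τ * ((k : ℂ) + 1/2)^2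
      + 2 * (Real.pi : ℂ) * Complex.I * u * ((k : ℂ) + 1/2))

/-- Jacobi theta function θ₃(u,τ). -/
noncomputable def theta3 (u τ : ℂ) : ℂ :=
  ∑' k : ℤ, Complex.exp ((Real.pi : ℂ) * Complex.I * τ * (k : ℂ)^2
      + 2 * (Real.pi : ℂ) * Complex.I * u * (k : ℂ))

/-- Jacobi theta function θ₄(u,τ). -/
noncomputable def theta4 (u τ : ℂ) : ℂ :=
  ∑' k : ℤ, Complex.exp ((Real.pi : ℂ) * Complex.I * τ * (k : ℂ)^2
      + 2 * (Real.pi : ℂ) * Complex.I * (u + 1/2) * (k : ℂ))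

/-- ζ_a(u,τ) = θ_a'(u,τ)/θ_a(u,τ). -/
noncomputable def zeta1 (u τ : ℂ) : ℂ := deriv (fun v => theta1 v τ) u / theta1 u τ
noncomputable def zeta2 (u τ : ℂ) : ℂ := deriv (fun v => theta2 v τ) u / theta2 u τ
noncomputable def zeta3 (u τ : ℂ) : ℂ := deriv (fun v => theta3 v τ) u / theta3 u τ
noncomputable def zeta4 (u τ : ℂ) : ℂ := deriv (fun v => theta4 v τ) u / theta4 u τ

/-- ℘_a(u,τ) = −∂_u ζ_a(u,τ). -/
noncomputable def wp1 (u τ : ℂ) : ℂ := -deriv (fun v => zeta1 v τ) u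
noncomputable def wp2 (u τ : ℂ) : ℂ := -deriv (fun v => zeta2 v τ) u
noncomputable def wp1' (u τ : ℂ) : ℂ := deriv (fun v => wp1 v τ) u
noncomputable def wp2' (u τ : ℂ) : ℂ := deriv (fun v => wp2 v τ) u

/-- S'(u,τ) = ζ₁(u,τ) − ζ₄(u,τ). -/
noncomputable def Sp (u τ : ℂ) : ℂ := zeta1 u τ - zeta4 u τ
/-- S''(u,τ) = ∂_u S'(u,τ). -/
noncomputable def Spp (u τ : ℂ) : ℂ := deriv (fun v => Sp v τ) u
/-- S'''(u,τ) = ∂_u S''(u,τ). -/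
noncomputable def Sppp (u τ : ℂ) : ℂ := deriv (fun v => Spp v τ) u

/-- Partial derivative in the j-th coordinate of a ℂ-valued function on ℝ^N. -/
noncomputable def pdC {N : ℕ} (j : Fin N) (f : (Fin N → ℝ) → ℂ) (x : Fin N → ℝ) : ℂ :=
  fderiv ℝ f x (Pi.single j 1)

/-- Partial derivative in the j-th coordinate of an ℝ-valued function on ℝ^d. -/
noncomputable def pd {d : ℕ} (j : Fin d) (f : (Fin d → ℝ) → ℝ) (x : Fin d → ℝ) : ℝ :=
  fderiv ℝ f x (Pi.single j 1)

/-- Γ_{ij} = −(1/(4πi)) (S'(ξ_j,τ)/S'(ξ_i,τ)) S''(ξ_i−ξ_j,τ) ∂τ/∂λ_j. -/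
noncomputable def Gam {N : ℕ} (ξ : Fin N → (Fin N → ℝ) → ℂ) (τ : (Fin N → ℝ) → ℂ)
    (i j : Fin N) (x : Fin N → ℝ) : ℂ :=
  -(1 / (4 * (Real.pi : ℂ) * Complex.I)) * (Sp (ξ j x) (τ x) / Sp (ξ i x) (τ x))
    * Spp (ξ i x - ξ j x) (τ x) * pdC j τ x

/-!
Everything rests on one law: if `4πi ∂ᵢv = (ζ₁(d, τ/2) - ζ₁(v + d, τ/2)) ∂ᵢτ`, then
`4πi ∂ᵢ S'(v, τ) = -(S'(v, τ) ℘₁(d, τ/2) + S'(v + d, τ) S''(d, τ)) ∂ᵢτ`. By the Gibbons–Tsarev and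
Löwner equations it applies with `d = ξᵢ - ξⱼ` both to `v = ξⱼ` and to `v = u + ξⱼ`. In the
derivative of `S'(ξⱼ) S'(u + ξⱼ) ∂ⱼτ` the two `℘₁`-terms then cancel against `∂ᵢ∂ⱼτ`, and the two
`S''`-terms, where `S''` is even, are the right-hand side.

The law combines two facts. Theta functions solve the heat equation, so their logarithmic
derivatives solve a Burgers equation, which expresses `∂_τ S'` through `u`-derivatives. Landen's
transformation gives `ζ₁(·, τ/2) = ζ₁(·, τ) + ζ₄(·, τ)` and shows that `S'` is a constant multiple
of `θ₂(·, τ/2) / θ₁(·, τ/2)`, so that Riemann's relation becomes an addition formula for `S''`; its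
derivatives in the two arguments eliminate `S'''`.
-/

open scoped Real Topology

/-! ### Theta series with characteristics -/

/-- The `n`-th term of the `k`-th `u`-derivative of the theta series with characteristics `a`, `b`;
see `thetaChar`. -/
noncomputable def thetaCharTerm (a b : ℝ) (k : ℕ) (n : ℤ) (u τ : ℂ) : ℂ :=
  (2 * π * I * (n + a)) ^ k * cexp (π * I * τ * (n + a) ^ 2 + 2 * π * I * (u + b) * (n + a))

/-- The `k`-th `u`-derivative of the theta function with characteristics `a`, `b`, that is of
`∑ n, exp (πiτ (n + a) ^ 2 + 2πi (u + b) (n + a))`. The derivatives are encoded as termwise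
differentiated series, so that the heat equation holds by construction. -/
noncomputable def thetaChar (a b : ℝ) (k : ℕ) (u τ : ℂ) : ℂ := ∑' n : ℤ, thetaCharTerm a b k n u τ

lemma norm_thetaCharTerm (a b : ℝ) (k : ℕ) (n : ℤ) (u τ : ℂ) :
    ‖thetaCharTerm a b k n u τ‖ =
      (2 * π) ^ k * |n + a| ^ k * Real.exp (-π * (τ.im * (n + a) ^ 2 + 2 * u.im * (n + a))) := by
  obtain ⟨x, hx⟩ : ∃ x : ℝ, x = n + a := ⟨_, rfl⟩
  have hx' : (n + a : ℂ) = x := by rw [hx]; push_cast; rfl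
  rw [thetaCharTerm, hx', ← hx, norm_mul, norm_pow, norm_exp, ← mul_pow]
  congr 2
  · simp [abs_of_pos Real.pi_pos]
  · simp only [pow_two, add_re, mul_re, add_im, mul_im, ofReal_re, ofReal_im, I_re, I_im, re_ofNat,
      im_ofNat]
    ring

lemma norm_thetaCharTerm_le (a b : ℝ) (k : ℕ) (n : ℤ) {S T : ℝ} (hT : 0 < T) {u τ : ℂ}
    (hu : |u.im| ≤ S) (hτ : T ≤ τ.im) :
    ‖thetaCharTerm a b k n u τ‖ ≤ (2 * π) ^ k * Real.exp (2 * π * S ^ 2 / T) *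
      HurwitzKernelBounds.f_int k a (T / 2) n := by
  obtain ⟨x, hx⟩ : ∃ x : ℝ, x = n + a := ⟨_, rfl⟩
  have hquad : T / 2 * x ^ 2 ≤ τ.im * x ^ 2 + 2 * u.im * x + 2 * S ^ 2 / T := by
    have hlin : -(S * |x|) ≤ u.im * x :=
      (neg_le_neg (mul_le_mul_of_nonneg_right hu (abs_nonneg x))).trans
        (abs_mul u.im x ▸ neg_abs_le _)
    have hsq : 0 ≤ (T * |x| - 2 * S) ^ 2 / (2 * T) := by positivity
    have hexpand : (T * |x| - 2 * S) ^ 2 / (2 * T)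
        = T / 2 * x ^ 2 - 2 * (S * |x|) + 2 * S ^ 2 / T := by
      rw [← sq_abs x]
      field_simp
      ring
    nlinarith [mul_le_mul_of_nonneg_right hτ (sq_nonneg x)]
  rw [norm_thetaCharTerm, HurwitzKernelBounds.f_int, ← hx]
  calc _ ≤ (2 * π) ^ k * |x| ^ k *
        Real.exp (2 * π * S ^ 2 / T + -π * x ^ 2 * (T / 2)) := by
        gcongr
        linear_combination π * hquad
    _ = _ := by rw [Real.exp_add]; ring

lemma exists_summable_norm_thetaCharTerm_le (a b : ℝ) (k : ℕ) (S : ℝ) {T : ℝ} (hT : 0 < T) :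
    ∃ B : ℤ → ℝ, Summable B ∧ ∀ n (u τ : ℂ), |u.im| ≤ S → T ≤ τ.im →
      ‖thetaCharTerm a b k n u τ‖ ≤ B n :=
  ⟨_, (HurwitzKernelBounds.summable_f_int k a (half_pos hT)).mul_left _,
    fun n _ _ hu hτ ↦ norm_thetaCharTerm_le a b k n hT hu hτ⟩

lemma summable_norm_thetaCharTerm (a b : ℝ) (k : ℕ) (u : ℂ) {τ : ℂ} (hτ : 0 < τ.im) :
    Summable fun n ↦ ‖thetaCharTerm a b k n u τ‖ := by
  obtain ⟨B, hB, hle⟩ := exists_summable_norm_thetaCharTerm_le a b k |u.im| hτ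
  exact hB.of_nonneg_of_le (fun _ ↦ norm_nonneg _) fun n ↦ hle n u τ le_rfl le_rfl

lemma hasSum_thetaCharTerm (a b : ℝ) (k : ℕ) (u : ℂ) {τ : ℂ} (hτ : 0 < τ.im) :
    HasSum (fun n ↦ thetaCharTerm a b k n u τ) (thetaChar a b k u τ) :=
  (summable_norm_thetaCharTerm a b k u hτ).of_norm.hasSum

lemma hasFDerivAt_thetaCharTerm (a b : ℝ) (k : ℕ) (n : ℤ) (p : ℂ × ℂ) :
    HasFDerivAt (fun p : ℂ × ℂ ↦ thetaCharTerm a b k n p.1 p.2)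
      (thetaCharTerm a b (k + 1) n p.1 p.2 • .fst ℂ ℂ ℂ +
        (thetaCharTerm a b (k + 2) n p.1 p.2 / (4 * π * I)) • .snd ℂ ℂ ℂ) p := by
  have hτ := ((hasFDerivAt_snd (𝕜 := ℂ) (p := p)).const_mul (π * I)).mul_const ((n + a : ℂ) ^ 2)
  have hu := (((hasFDerivAt_fst (𝕜 := ℂ) (p := p)).add_const (b : ℂ)).const_mul
    (2 * π * I)).mul_const (n + a : ℂ)
  refine ((hτ.add hu).cexp.const_mul ((2 * π * I * (n + a)) ^ k)).congr_fderiv ?_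
  refine ContinuousLinearMap.ext fun q ↦ ?_
  simp only [thetaCharTerm, add_apply, smul_apply, smul_eq_mul, Pi.add_apply]
  field_simp
  ring

/- The `τ`-component is the heat equation `4πi ∂_τ θ = ∂_u² θ`. -/
lemma hasFDerivAt_thetaChar (a b : ℝ) (k : ℕ) (u : ℂ) {τ : ℂ} (hτ : 0 < τ.im) :
    HasFDerivAt (fun p : ℂ × ℂ ↦ thetaChar a b k p.1 p.2)
      (thetaChar a b (k + 1) u τ • .fst ℂ ℂ ℂ +
        (thetaChar a b (k + 2) u τ / (4 * π * I)) • .snd ℂ ℂ ℂ) (u, τ) := by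
  obtain ⟨T, hT, hTτ⟩ := exists_between hτ
  obtain ⟨S, hS⟩ := exists_gt |u.im|
  obtain ⟨B₁, hB₁, hle₁⟩ := exists_summable_norm_thetaCharTerm_le a b (k + 1) S hT
  obtain ⟨B₂, hB₂, hle₂⟩ := exists_summable_norm_thetaCharTerm_le a b (k + 2) S hT
  let V : Set (ℂ × ℂ) := (im ⁻¹' Set.Ioo (-S) S) ×ˢ (im ⁻¹' Set.Ioi T)
  have hV_open : IsOpen V :=
    (isOpen_Ioo.preimage continuous_im).prod (isOpen_Ioi.preimage continuous_im)
  have hV_conn : IsPreconnected V :=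
    (((convex_Ioo (-S) S).linear_preimage imLm).prod
      ((convex_Ioi T).linear_preimage imLm)).isPreconnected
  have hmem : (u, τ) ∈ V := ⟨abs_lt.mp hS, hTτ⟩
  have hbound (n : ℤ) (p : ℂ × ℂ) (hp : p ∈ V) :
      ‖thetaCharTerm a b (k + 1) n p.1 p.2 • ContinuousLinearMap.fst ℂ ℂ ℂ +
        (thetaCharTerm a b (k + 2) n p.1 p.2 / (4 * π * I)) • ContinuousLinearMap.snd ℂ ℂ ℂ‖
        ≤ B₁ n + B₂ n / ‖(4 * π * I : ℂ)‖ := by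
    have hp₁ : |p.1.im| ≤ S := (abs_lt.mpr hp.1).le
    have hp₂ : T ≤ p.2.im := (Set.mem_Ioi.mp hp.2).le
    refine norm_add_le_of_le ?_ ?_ <;> rw [norm_smul]
    · exact (mul_le_of_le_one_right (norm_nonneg _) (ContinuousLinearMap.norm_fst_le ..)).trans
        (hle₁ n _ _ hp₁ hp₂)
    · rw [norm_div]
      exact (mul_le_of_le_one_right (by positivity) (ContinuousLinearMap.norm_snd_le ..)).trans
        (by gcongr; exact hle₂ n _ _ hp₁ hp₂)
  refine (hasFDerivAt_tsum_of_isPreconnected (hB₁.add (hB₂.div_const _)) hV_open hV_conn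
    (fun n p _ ↦ hasFDerivAt_thetaCharTerm a b k n p) hbound hmem
    (hasSum_thetaCharTerm a b k u hτ).summable hmem).congr_fderiv ?_
  exact (((hasSum_thetaCharTerm a b (k + 1) u hτ).smul_const _).add
    (((hasSum_thetaCharTerm a b (k + 2) u hτ).div_const _).smul_const _)).tsum_eq

lemma hasDerivAt_thetaChar (a b : ℝ) (k : ℕ) (u : ℂ) {τ : ℂ} (hτ : 0 < τ.im) :
    HasDerivAt (fun v ↦ thetaChar a b k v τ) (thetaChar a b (k + 1) u τ) u := by
  simpa using! (hasFDerivAt_thetaChar a b k u hτ).comp_hasDerivAt u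
    ((hasDerivAt_id u).prodMk (hasDerivAt_const u τ))

lemma thetaChar_neg (a b : ℝ) (u τ : ℂ) :
    thetaChar (-a) (-b) 0 (-u) τ = thetaChar a b 0 u τ := by
  rw [thetaChar, ← (Equiv.neg ℤ).tsum_eq]
  refine tsum_congr fun n ↦ ?_
  simp only [thetaCharTerm, Equiv.neg_apply]
  push_cast
  ring_nf

lemma thetaChar_add_one_left (a b : ℝ) (k : ℕ) (u τ : ℂ) :
    thetaChar (a + 1) b k u τ = thetaChar a b k u τ := by
  rw [thetaChar, ← (Equiv.subRight 1).tsum_eq]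
  refine tsum_congr fun n ↦ ?_
  simp only [thetaCharTerm, Equiv.subRight_apply]
  push_cast
  ring_nf

lemma thetaChar_add_one_right (a b : ℝ) (k : ℕ) (u τ : ℂ) :
    thetaChar a (b + 1) k u τ = cexp (2 * π * I * a) * thetaChar a b k u τ := by
  rw [thetaChar, thetaChar, ← tsum_mul_left]
  refine tsum_congr fun n ↦ ?_
  have hexp : π * I * τ * (n + a) ^ 2 + 2 * π * I * (u + (b + 1 : ℝ)) * (n + a) =
      2 * π * I * a + (π * I * τ * (n + a) ^ 2 + 2 * π * I * (u + b) * (n + a)) +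
        n * (2 * π * I) := by
    push_cast
    ring
  rw [thetaCharTerm, thetaCharTerm, hexp, exp_add, exp_int_mul_two_pi_mul_I, mul_one, exp_add]
  ring

/-- The bijection of `ℤ × ℤ ⊕ ℤ × ℤ` with `ℤ × ℤ` that records half the sum and half the difference
of a pair of integers, with one summand for each parity of the sum. -/
noncomputable def halfSumDiffEquiv : (ℤ × ℤ) ⊕ (ℤ × ℤ) ≃ ℤ × ℤ :=
  .ofBijective
    (Sum.elim (fun z ↦ (z.1 + z.2, z.1 - z.2)) fun z ↦ (z.1 + z.2 + 1, z.1 - z.2)) <| by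
    constructor
    · rintro (⟨s, t⟩ | ⟨s, t⟩) (⟨s', t'⟩ | ⟨s', t'⟩) h <;>
        simp only [Sum.elim_inl, Sum.elim_inr, Prod.mk.injEq, Sum.inl.injEq, Sum.inr.injEq,
          reduceCtorEq] at h ⊢ <;> omega
    · rintro ⟨m, n⟩
      rcases Int.even_or_odd' (m + n) with ⟨s, h | h⟩
      · exact ⟨.inl (s, m - s), by ext <;> simp only [Sum.elim_inl] <;> omega⟩
      · exact ⟨.inr (s, m - s - 1), by ext <;> simp only [Sum.elim_inr] <;> omega⟩

lemma hasSum_thetaCharTerm_mul (a b a' b' : ℝ) (u u' : ℂ) {τ : ℂ} (hτ : 0 < τ.im) :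
    HasSum (fun z : ℤ × ℤ ↦ thetaCharTerm a b 0 z.1 u τ * thetaCharTerm a' b' 0 z.2 u' τ)
      (thetaChar a b 0 u τ * thetaChar a' b' 0 u' τ) := by
  have h := summable_norm_thetaCharTerm a b 0 u hτ
  have h' := summable_norm_thetaCharTerm a' b' 0 u' hτ
  rw [thetaChar, thetaChar, tsum_mul_tsum_of_summable_norm h h']
  exact (summable_mul_of_summable_norm h h').hasSum

lemma thetaChar_mul_thetaChar (a b a' b' : ℝ) (u u' : ℂ) {τ : ℂ} (hτ : 0 < τ.im) :
    thetaChar a b 0 u τ * thetaChar a' b' 0 u' τ =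
      thetaChar ((a + a') / 2) (b + b') 0 (u + u') (2 * τ) *
          thetaChar ((a - a') / 2) (b - b') 0 (u - u') (2 * τ) +
        thetaChar ((a + a' + 1) / 2) (b + b') 0 (u + u') (2 * τ) *
          thetaChar ((a - a' + 1) / 2) (b - b') 0 (u - u') (2 * τ) := by
  have h2τ : 0 < (2 * τ).im := by simpa using hτ
  have heven (z : ℤ × ℤ) :
      thetaCharTerm a b 0 (z.1 + z.2) u τ * thetaCharTerm a' b' 0 (z.1 - z.2) u' τ =
        thetaCharTerm ((a + a') / 2) (b + b') 0 z.1 (u + u') (2 * τ) *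
          thetaCharTerm ((a - a') / 2) (b - b') 0 z.2 (u - u') (2 * τ) := by
    simp only [thetaCharTerm, pow_zero, one_mul, ← exp_add]
    push_cast
    ring_nf
  have hodd (z : ℤ × ℤ) :
      thetaCharTerm a b 0 (z.1 + z.2 + 1) u τ * thetaCharTerm a' b' 0 (z.1 - z.2) u' τ =
        thetaCharTerm ((a + a' + 1) / 2) (b + b') 0 z.1 (u + u') (2 * τ) *
          thetaCharTerm ((a - a' + 1) / 2) (b - b') 0 z.2 (u - u') (2 * τ) := by
    simp only [thetaCharTerm, pow_zero, one_mul, ← exp_add]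
    push_cast
    ring_nf
  refine ((halfSumDiffEquiv.hasSum_iff
    (f := fun z : ℤ × ℤ ↦ thetaCharTerm a b 0 z.1 u τ * thetaCharTerm a' b' 0 z.2 u' τ)).mpr
    (hasSum_thetaCharTerm_mul a b a' b' u u' hτ)).unique (HasSum.sum ?_ ?_)
  · exact (hasSum_thetaCharTerm_mul _ _ _ _ _ _ h2τ).congr_fun heven
  · exact (hasSum_thetaCharTerm_mul _ _ _ _ _ _ h2τ).congr_fun hodd

/-! ### The Jacobi theta functions -/

lemma thetaChar_one_left (b : ℝ) (k : ℕ) (u τ : ℂ) :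
    thetaChar 1 b k u τ = thetaChar 0 b k u τ := by
  simpa only [zero_add] using thetaChar_add_one_left 0 b k u τ

lemma thetaChar_zero_add_one (b : ℝ) (k : ℕ) (u τ : ℂ) :
    thetaChar 0 (b + 1) k u τ = thetaChar 0 b k u τ := by
  simp [thetaChar_add_one_right]

lemma thetaChar_half_add_one (b : ℝ) (k : ℕ) (u τ : ℂ) :
    thetaChar (1 / 2) (b + 1) k u τ = -thetaChar (1 / 2) b k u τ := by
  have h : (2 * π * I * (1 / 2 : ℝ) : ℂ) = π * I := by
    push_cast
    ring
  rw [thetaChar_add_one_right, h, exp_pi_mul_I, neg_one_mul]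

lemma theta1_eq_neg_thetaChar (u τ : ℂ) : theta1 u τ = -thetaChar (1 / 2) (1 / 2) 0 u τ := by
  simp [theta1, thetaChar, thetaCharTerm]

lemma theta2_eq_thetaChar (u τ : ℂ) : theta2 u τ = thetaChar (1 / 2) 0 0 u τ := by
  simp [theta2, thetaChar, thetaCharTerm]

lemma theta3_eq_thetaChar (u τ : ℂ) : theta3 u τ = thetaChar 0 0 0 u τ := by
  simp [theta3, thetaChar, thetaCharTerm]

lemma theta4_eq_thetaChar (u τ : ℂ) : theta4 u τ = thetaChar 0 (1 / 2) 0 u τ := by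
  simp [theta4, thetaChar, thetaCharTerm]

lemma differentiable_thetaChar (a b : ℝ) (k : ℕ) {τ : ℂ} (hτ : 0 < τ.im) :
    Differentiable ℂ fun u ↦ thetaChar a b k u τ :=
  fun u ↦ (hasDerivAt_thetaChar a b k u hτ).differentiableAt

lemma differentiable_theta1 {τ : ℂ} (hτ : 0 < τ.im) : Differentiable ℂ fun u ↦ theta1 u τ := by
  simpa only [theta1_eq_neg_thetaChar] using! (differentiable_thetaChar _ _ 0 hτ).fun_neg

lemma differentiable_theta2 {τ : ℂ} (hτ : 0 < τ.im) : Differentiable ℂ fun u ↦ theta2 u τ := by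
  simpa only [theta2_eq_thetaChar] using differentiable_thetaChar _ _ 0 hτ

lemma differentiable_theta4 {τ : ℂ} (hτ : 0 < τ.im) : Differentiable ℂ fun u ↦ theta4 u τ := by
  simpa only [theta4_eq_thetaChar] using differentiable_thetaChar _ _ 0 hτ

lemma theta1_neg (u τ : ℂ) : theta1 (-u) τ = -theta1 u τ := by
  have h := thetaChar_half_add_one (-(1 / 2)) 0 u τ
  have h' := thetaChar_add_one_left (-(1 / 2)) (-(1 / 2)) 0 u τ
  rw [theta1_eq_neg_thetaChar, theta1_eq_neg_thetaChar, ← thetaChar_neg, neg_neg]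
  norm_num at h h' ⊢
  rw [h, h']

lemma theta2_neg (u τ : ℂ) : theta2 (-u) τ = theta2 u τ := by
  rw [theta2_eq_thetaChar, theta2_eq_thetaChar, ← thetaChar_neg, neg_neg,
    ← thetaChar_add_one_left]
  norm_num

lemma theta4_neg (u τ : ℂ) : theta4 (-u) τ = theta4 u τ := by
  rw [theta4_eq_thetaChar, theta4_eq_thetaChar, ← thetaChar_neg, neg_neg, neg_zero,
    ← thetaChar_zero_add_one (-(1 / 2))]
  norm_num

lemma theta1_zero (τ : ℂ) : theta1 0 τ = 0 := by
  simpa [CharZero.eq_neg_self_iff] using theta1_neg 0 τ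

lemma theta2_mul_theta2 (p q : ℂ) {τ : ℂ} (hτ : 0 < τ.im) :
    theta2 p τ * theta2 q τ =
      theta2 (p + q) (2 * τ) * theta3 (p - q) (2 * τ) +
        theta3 (p + q) (2 * τ) * theta2 (p - q) (2 * τ) := by
  have h := thetaChar_mul_thetaChar (1 / 2) 0 (1 / 2) 0 p q hτ
  norm_num [thetaChar_one_left] at h
  simpa only [theta2_eq_thetaChar, theta3_eq_thetaChar] using h

lemma theta1_mul_theta1 (p q : ℂ) {τ : ℂ} (hτ : 0 < τ.im) :
    theta1 p τ * theta1 q τ =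
      theta3 (p + q) (2 * τ) * theta2 (p - q) (2 * τ) -
        theta2 (p + q) (2 * τ) * theta3 (p - q) (2 * τ) := by
  have h := thetaChar_mul_thetaChar (1 / 2) (1 / 2) (1 / 2) (1 / 2) p q hτ
  have h₀ := thetaChar_zero_add_one 0 0 (p + q) (2 * τ)
  have h₁ := thetaChar_half_add_one 0 0 (p + q) (2 * τ)
  norm_num [thetaChar_one_left] at h h₀ h₁
  rw [h₀, h₁] at h
  simp only [theta1_eq_neg_thetaChar, theta2_eq_thetaChar, theta3_eq_thetaChar]
  linear_combination h

lemma theta1_mul_theta2 (p q : ℂ) {τ : ℂ} (hτ : 0 < τ.im) :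
    theta1 p τ * theta2 q τ =
      theta1 (p + q) (2 * τ) * theta4 (p - q) (2 * τ) +
        theta4 (p + q) (2 * τ) * theta1 (p - q) (2 * τ) := by
  have h := thetaChar_mul_thetaChar (1 / 2) (1 / 2) (1 / 2) 0 p q hτ
  norm_num [thetaChar_one_left] at h
  simp only [theta1_eq_neg_thetaChar, theta2_eq_thetaChar, theta4_eq_thetaChar]
  linear_combination -h

/-! ### The addition formula for `S''` -/

section Parity

variable {𝕜 F : Type*} [NontriviallyNormedField 𝕜] [NormedAddCommGroup F] [NormedSpace 𝕜 F]
  {f : 𝕜 → F}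

lemma deriv_neg_of_odd (hf : ∀ u, f (-u) = -f u) (u : 𝕜) : deriv f (-u) = deriv f u := by
  have h := deriv_comp_neg f u
  rw [funext hf, deriv.fun_neg, neg_inj] at h
  exact h.symm

lemma deriv_neg_of_even (hf : ∀ u, f (-u) = f u) (u : 𝕜) : deriv f (-u) = -deriv f u := by
  have h := deriv_comp_neg f u
  rw [funext hf] at h
  rw [h, neg_neg]

end Parity

lemma deriv_theta1_neg (u τ : ℂ) : deriv (theta1 · τ) (-u) = deriv (theta1 · τ) u :=
  deriv_neg_of_odd (f := (theta1 · τ)) (theta1_neg · τ) u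

lemma deriv_theta4_neg (u τ : ℂ) : deriv (theta4 · τ) (-u) = -deriv (theta4 · τ) u :=
  deriv_neg_of_even (f := (theta4 · τ)) (theta4_neg · τ) u

lemma deriv_theta2_zero (τ : ℂ) : deriv (theta2 · τ) 0 = 0 := by
  simpa [CharZero.eq_neg_self_iff] using
    deriv_neg_of_even (f := (theta2 · τ)) (theta2_neg · τ) 0

lemma Sp_neg (u τ : ℂ) : Sp (-u) τ = -Sp u τ := by
  simp only [Sp, zeta1, zeta4, theta1_neg, theta4_neg, deriv_theta1_neg, deriv_theta4_neg]
  ring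

lemma Spp_neg (u τ : ℂ) : Spp (-u) τ = Spp u τ :=
  deriv_neg_of_odd (f := (Sp · τ)) (Sp_neg · τ) u

lemma half_im_pos {τ : ℂ} (hτ : 0 < τ.im) : 0 < (τ / 2).im := by simpa using hτ

lemma theta1_landen_transformation (x : ℂ) {τ : ℂ} (hτ : 0 < τ.im) :
    theta1 x (τ / 2) * theta2 0 (τ / 2) = 2 * (theta1 x τ * theta4 x τ) := by
  rw [theta1_mul_theta2 x 0 (half_im_pos hτ), mul_div_cancel₀ τ two_ne_zero, add_zero, sub_zero]
  ring

/- Expanding each pair of factors by the product formulas turns both sides into the same polynomial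
in theta functions of period `2 * τ`. -/
lemma theta1_riemann_relation (x d e : ℂ) {τ : ℂ} (hτ : 0 < τ.im) :
    theta1 (x + d + e) τ * theta1 (d - e) τ * (theta2 x τ * theta2 0 τ) =
      theta1 (x + d) τ * theta1 d τ * (theta2 (x + e) τ * theta2 e τ) -
        theta1 (x + e) τ * theta1 e τ * (theta2 (x + d) τ * theta2 d τ) := by
  simp only [theta1_mul_theta1 _ _ hτ, theta2_mul_theta2 _ _ hτ]
  ring_nf

lemma deriv_theta1_zero_mul_theta2 (x : ℂ) {τ : ℂ} (hτ : 0 < τ.im) :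
    deriv (theta1 · (τ / 2)) 0 * theta2 x (τ / 2) =
      2 * (deriv (theta1 · τ) x * theta4 x τ - theta1 x τ * deriv (theta4 · τ) x) := by
  have hd1 := differentiable_theta1 hτ
  have hd4 := differentiable_theta4 hτ
  have hleft := ((differentiable_theta1 (half_im_pos hτ)) 0).hasDerivAt.mul_const
    (theta2 x (τ / 2))
  have hright := (((hd1 (0 + x)).hasDerivAt.comp_add_const 0 x).mul
      ((hd4 (0 - x)).hasDerivAt.comp_sub_const 0 x)).add
    (((hd4 (0 + x)).hasDerivAt.comp_add_const 0 x).mul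
      ((hd1 (0 - x)).hasDerivAt.comp_sub_const 0 x))
  have hprod (y : ℂ) : theta1 y (τ / 2) * theta2 x (τ / 2) =
      theta1 (y + x) τ * theta4 (y - x) τ + theta4 (y + x) τ * theta1 (y - x) τ := by
    rw [theta1_mul_theta2 y x (half_im_pos hτ), mul_div_cancel₀ τ two_ne_zero]
  rw [hleft.unique (hright.congr_of_eventuallyEq (.of_forall hprod))]
  simp only [zero_add, zero_sub, theta1_neg, theta4_neg, deriv_theta1_neg, deriv_theta4_neg]
  ring

lemma theta1_riemann_relation_deriv (x d : ℂ) {τ : ℂ} (hτ : 0 < τ.im) :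
    (deriv (theta1 · τ) (x + d) * theta1 d τ - theta1 (x + d) τ * deriv (theta1 · τ) d) *
        (theta2 x τ * theta2 0 τ) =
      theta1 (x + d) τ * theta1 d τ * (deriv (theta2 · τ) x * theta2 0 τ) -
        theta1 x τ * deriv (theta1 · τ) 0 * (theta2 (x + d) τ * theta2 d τ) := by
  have h1 (v : ℂ) := (differentiable_theta1 hτ v).hasDerivAt
  have h2 (v : ℂ) := (differentiable_theta2 hτ v).hasDerivAt
  have hleft := (((h1 (x + d + 0)).comp_const_add (x + d) 0).mul
    ((h1 (d - 0)).comp_const_sub d 0)).mul_const (theta2 x τ * theta2 0 τ)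
  have hright := ((((h2 (x + 0)).comp_const_add x 0).mul (h2 0)).const_mul
      (theta1 (x + d) τ * theta1 d τ)).sub
    ((((h1 (x + 0)).comp_const_add x 0).mul (h1 0)).mul_const (theta2 (x + d) τ * theta2 d τ))
  have h := hleft.unique
    (hright.congr_of_eventuallyEq (.of_forall fun e ↦ theta1_riemann_relation x d e hτ))
  simp only [add_zero, sub_zero, deriv_theta2_zero, theta1_zero] at h
  linear_combination h

/-- `u` is neither a zero of `θ₁(·, τ)` nor of `θ₄(·, τ)`, so that `S'(·, τ)` is analytic at `u`. -/
def IsThetaRegular (u τ : ℂ) : Prop := theta1 u τ ≠ 0 ∧ theta4 u τ ≠ 0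

namespace IsThetaRegular

variable {u τ : ℂ}

protected lemma eventually (hτ : 0 < τ.im) (hu : IsThetaRegular u τ) :
    ∀ᶠ v in 𝓝 u, IsThetaRegular v τ :=
  ((differentiable_theta1 hτ u).continuousAt.eventually_ne hu.1).and
    ((differentiable_theta4 hτ u).continuousAt.eventually_ne hu.2)

lemma half_mul_ne_zero (hτ : 0 < τ.im) (hu : IsThetaRegular u τ) :
    theta1 u (τ / 2) * theta2 0 (τ / 2) ≠ 0 := by
  rw [theta1_landen_transformation u hτ]
  exact mul_ne_zero two_ne_zero (mul_ne_zero hu.1 hu.2)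

lemma theta1_half_ne_zero (hτ : 0 < τ.im) (hu : IsThetaRegular u τ) : theta1 u (τ / 2) ≠ 0 :=
  left_ne_zero_of_mul (hu.half_mul_ne_zero hτ)

lemma theta2_zero_half_ne_zero (hτ : 0 < τ.im) (hu : IsThetaRegular u τ) :
    theta2 0 (τ / 2) ≠ 0 :=
  right_ne_zero_of_mul (hu.half_mul_ne_zero hτ)

end IsThetaRegular

lemma zeta1_half {u τ : ℂ} (hτ : 0 < τ.im) (hu : IsThetaRegular u τ) :
    zeta1 u (τ / 2) = zeta1 u τ + zeta4 u τ := by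
  have h := congrArg (logDeriv · u) (funext fun v ↦ theta1_landen_transformation v hτ)
  rwa [logDeriv_mul_const u _ (hu.theta2_zero_half_ne_zero hτ),
    logDeriv_const_mul u _ two_ne_zero,
    logDeriv_mul u hu.1 hu.2 (differentiable_theta1 hτ u) (differentiable_theta4 hτ u)] at h

lemma analyticAt_zeta1 {u τ : ℂ} (hτ : 0 < τ.im) (hu : theta1 u τ ≠ 0) :
    AnalyticAt ℂ (zeta1 · τ) u :=
  ((differentiable_theta1 hτ).analyticAt u).deriv.fun_div
    ((differentiable_theta1 hτ).analyticAt u) hu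

lemma analyticAt_zeta4 {u τ : ℂ} (hτ : 0 < τ.im) (hu : theta4 u τ ≠ 0) :
    AnalyticAt ℂ (zeta4 · τ) u :=
  ((differentiable_theta4 hτ).analyticAt u).deriv.fun_div
    ((differentiable_theta4 hτ).analyticAt u) hu

lemma analyticAt_Sp {u τ : ℂ} (hτ : 0 < τ.im) (hu : IsThetaRegular u τ) :
    AnalyticAt ℂ (Sp · τ) u :=
  (analyticAt_zeta1 hτ hu.1).fun_sub (analyticAt_zeta4 hτ hu.2)

lemma hasDerivAt_Sp {u τ : ℂ} (hτ : 0 < τ.im) (hu : IsThetaRegular u τ) :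
    HasDerivAt (Sp · τ) (Spp u τ) u :=
  (analyticAt_Sp hτ hu).differentiableAt.hasDerivAt

lemma hasDerivAt_Spp {u τ : ℂ} (hτ : 0 < τ.im) (hu : IsThetaRegular u τ) :
    HasDerivAt (Spp · τ) (Sppp u τ) u :=
  (analyticAt_Sp hτ hu).deriv.differentiableAt.hasDerivAt

lemma hasDerivAt_zeta1 {u τ : ℂ} (hτ : 0 < τ.im) (hu : theta1 u τ ≠ 0) :
    HasDerivAt (zeta1 · τ) (-wp1 u τ) u := by
  simpa only [wp1, neg_neg] using (analyticAt_zeta1 hτ hu).differentiableAt.hasDerivAt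

lemma Sp_mul_theta1_half {u τ : ℂ} (hτ : 0 < τ.im) (hu : IsThetaRegular u τ) :
    Sp u τ * (theta1 u (τ / 2) * theta2 0 (τ / 2)) =
      deriv (theta1 · (τ / 2)) 0 * theta2 u (τ / 2) := by
  obtain ⟨h1, h4⟩ := hu
  rw [theta1_landen_transformation u hτ, deriv_theta1_zero_mul_theta2 u hτ, Sp, zeta1, zeta4]
  field_simp

lemma Spp_mul_theta1_half {u τ : ℂ} (hτ : 0 < τ.im) (hu : IsThetaRegular u τ) :
    (Spp u τ * theta1 u (τ / 2) + Sp u τ * deriv (theta1 · (τ / 2)) u) * theta2 0 (τ / 2) =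
      deriv (theta1 · (τ / 2)) 0 * deriv (theta2 · (τ / 2)) u := by
  have h1 := (differentiable_theta1 (half_im_pos hτ) u).hasDerivAt.mul_const (theta2 0 (τ / 2))
  have h2 := (differentiable_theta2 (half_im_pos hτ) u).hasDerivAt.const_mul
    (deriv (theta1 · (τ / 2)) 0)
  have h := ((hasDerivAt_Sp hτ hu).fun_mul h1).unique
    (h2.congr_of_eventuallyEq ((hu.eventually hτ).mono fun v hv ↦ Sp_mul_theta1_half hτ hv))
  linear_combination h

/- Riemann's relation with `θ₂(·, τ/2)` eliminated in favour of `S'`. -/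
lemma Spp_eq_of_isThetaRegular {x d τ : ℂ} (hτ : 0 < τ.im) (hx : IsThetaRegular x τ)
    (hd : IsThetaRegular d τ) (hxd : IsThetaRegular (x + d) τ) :
    Spp x τ = Sp (x + d) τ * Sp d τ +
      Sp x τ * (zeta1 (x + d) (τ / 2) - zeta1 x (τ / 2) - zeta1 d (τ / 2)) := by
  have hζ {y : ℂ} (hy : IsThetaRegular y τ) :
      zeta1 y (τ / 2) * theta1 y (τ / 2) = deriv (theta1 · (τ / 2)) y :=
    div_mul_cancel₀ _ (hy.theta1_half_ne_zero hτ)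
  have hriemann := theta1_riemann_relation_deriv x d (half_im_pos hτ)
  have hdenom : theta1 (x + d) (τ / 2) * theta1 d (τ / 2) * theta1 x (τ / 2) *
      theta2 0 (τ / 2) ^ 2 ≠ 0 :=
    mul_ne_zero (mul_ne_zero (mul_ne_zero (hxd.theta1_half_ne_zero hτ)
      (hd.theta1_half_ne_zero hτ)) (hx.theta1_half_ne_zero hτ))
      (pow_ne_zero 2 (hx.theta2_zero_half_ne_zero hτ))
  refine mul_right_cancel₀ hdenom ?_
  rw [← hζ hd, ← hζ hxd] at hriemann
  have hSpp := Spp_mul_theta1_half hτ hx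
  rw [← hζ hx] at hSpp
  linear_combination
    theta1 (x + d) (τ / 2) * theta1 d (τ / 2) * theta2 0 (τ / 2) * hSpp -
    deriv (theta1 · (τ / 2)) 0 * hriemann -
    (zeta1 (x + d) (τ / 2) - zeta1 d (τ / 2)) * theta1 (x + d) (τ / 2) * theta1 d (τ / 2) *
      theta2 0 (τ / 2) * Sp_mul_theta1_half hτ hx -
    theta1 x (τ / 2) * Sp d τ * theta1 d (τ / 2) * theta2 0 (τ / 2) *
      Sp_mul_theta1_half hτ hxd -
    theta1 x (τ / 2) * deriv (theta1 · (τ / 2)) 0 * theta2 (x + d) (τ / 2) *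
      Sp_mul_theta1_half hτ hd

/- The difference of the `x`- and the `d`-derivative of `Spp_eq_of_isThetaRegular`. -/
lemma Sppp_add_eq_of_isThetaRegular {x d τ : ℂ} (hτ : 0 < τ.im) (hx : IsThetaRegular x τ)
    (hd : IsThetaRegular d τ) (hxd : IsThetaRegular (x + d) τ) :
    Sppp x τ + Spp x τ * zeta1 x (τ / 2) - Sp x τ * wp1 x (τ / 2) =
      Spp x τ * (zeta1 (x + d) (τ / 2) - zeta1 d (τ / 2)) - Sp x τ * wp1 d (τ / 2) -
        Sp (x + d) τ * Spp d τ := by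
  have hζ {y : ℂ} (hy : IsThetaRegular y τ) :
      HasDerivAt (zeta1 · (τ / 2)) (-wp1 y (τ / 2)) y :=
    hasDerivAt_zeta1 (half_im_pos hτ) (hy.theta1_half_ne_zero hτ)
  have hSxd := hasDerivAt_Sp hτ hxd
  have hζxd := hζ hxd
  have hderiv_x := (hasDerivAt_Spp hτ hx).unique <|
    (((hSxd.comp_add_const x d).mul_const (Sp d τ)).fun_add ((hasDerivAt_Sp hτ hx).fun_mul
      (((hζxd.comp_add_const x d).fun_sub (hζ hx)).sub_const
        (zeta1 d (τ / 2))))).congr_of_eventuallyEq <| by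
      have hnear := (continuous_add_const d).continuousAt.eventually (hxd.eventually hτ)
      filter_upwards [hx.eventually hτ, hnear] with v hv hvd
      exact Spp_eq_of_isThetaRegular hτ hv hd hvd
  have hderiv_d := (hasDerivAt_const d (Spp x τ)).unique <|
    (((hSxd.comp_const_add x d).fun_mul (hasDerivAt_Sp hτ hd)).fun_add
      (((hζxd.comp_const_add x d).sub_const (zeta1 x (τ / 2))).fun_sub
        (hζ hd) |>.const_mul (Sp x τ))).congr_of_eventuallyEq <| by
      have hnear := (continuous_const_add x).continuousAt.eventually (hxd.eventually hτ)
      filter_upwards [hd.eventually hτ, hnear] with v hv hxv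
      exact Spp_eq_of_isThetaRegular hτ hx hv hxv
  linear_combination hderiv_x - hderiv_d

/-! ### The Burgers equation -/

section LogDeriv

variable (a b : ℝ) {u τ : ℂ}

lemma logDeriv_thetaChar (u : ℂ) (hτ : 0 < τ.im) :
    logDeriv (thetaChar a b 0 · τ) u = thetaChar a b 1 u τ / thetaChar a b 0 u τ := by
  rw [logDeriv_apply, (hasDerivAt_thetaChar a b 0 u hτ).deriv]

lemma hasDerivAt_thetaChar_div (k : ℕ) (hτ : 0 < τ.im) (hu : thetaChar a b 0 u τ ≠ 0) :
    HasDerivAt (fun v ↦ thetaChar a b k v τ / thetaChar a b 0 v τ)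
      (thetaChar a b (k + 1) u τ / thetaChar a b 0 u τ -
        thetaChar a b k u τ / thetaChar a b 0 u τ *
          (thetaChar a b 1 u τ / thetaChar a b 0 u τ)) u := by
  refine ((hasDerivAt_thetaChar a b k u hτ).fun_div (hasDerivAt_thetaChar a b 0 u hτ)
    hu).congr_deriv ?_
  field_simp

lemma hasDerivAt_logDeriv_thetaChar (hτ : 0 < τ.im) (hu : thetaChar a b 0 u τ ≠ 0) :
    HasDerivAt (logDeriv (thetaChar a b 0 · τ))
      (thetaChar a b 2 u τ / thetaChar a b 0 u τ - logDeriv (thetaChar a b 0 · τ) u ^ 2) u := by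
  refine ((hasDerivAt_thetaChar_div a b 1 hτ hu).congr_of_eventuallyEq
    (.of_forall fun v ↦ logDeriv_thetaChar a b v hτ)).congr_deriv ?_
  rw [logDeriv_thetaChar a b u hτ, pow_two]

lemma deriv_deriv_logDeriv_thetaChar (hτ : 0 < τ.im) (hu : thetaChar a b 0 u τ ≠ 0) :
    deriv (deriv (logDeriv (thetaChar a b 0 · τ))) u =
      thetaChar a b 3 u τ / thetaChar a b 0 u τ -
        thetaChar a b 2 u τ / thetaChar a b 0 u τ * logDeriv (thetaChar a b 0 · τ) u -
        2 * logDeriv (thetaChar a b 0 · τ) u * deriv (logDeriv (thetaChar a b 0 · τ)) u := by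
  have hnear : ∀ᶠ v in 𝓝 u, thetaChar a b 0 v τ ≠ 0 :=
    (differentiable_thetaChar a b 0 hτ u).continuousAt.eventually_ne hu
  have hlog := hasDerivAt_logDeriv_thetaChar a b hτ hu
  rw [Filter.EventuallyEq.deriv_eq
      (hnear.mono fun v hv ↦ (hasDerivAt_logDeriv_thetaChar a b hτ hv).deriv),
    ((hasDerivAt_thetaChar_div a b 2 hτ hu).fun_sub (hlog.fun_pow 2)).deriv, hlog.deriv,
    logDeriv_thetaChar a b u hτ]
  ring

/- The Cole–Hopf transformation: the logarithmic derivative `ζ` of a solution of the heat equation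
solves the Burgers equation `4πi ∂_τ ζ = ζ'' + 2ζζ'`. -/
lemma hasFDerivAt_logDeriv_thetaChar (hτ : 0 < τ.im) (hu : thetaChar a b 0 u τ ≠ 0) :
    HasFDerivAt (fun p : ℂ × ℂ ↦ logDeriv (thetaChar a b 0 · p.2) p.1)
      (deriv (logDeriv (thetaChar a b 0 · τ)) u • .fst ℂ ℂ ℂ +
        ((deriv (deriv (logDeriv (thetaChar a b 0 · τ))) u +
          2 * logDeriv (thetaChar a b 0 · τ) u * deriv (logDeriv (thetaChar a b 0 · τ)) u) /
            (4 * π * I)) • .snd ℂ ℂ ℂ) (u, τ) := by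
  have hnear : ∀ᶠ p : ℂ × ℂ in 𝓝 (u, τ), 0 < p.2.im :=
    (isOpen_lt continuous_const (continuous_im.comp continuous_snd)).mem_nhds hτ
  have hquot := (hasFDerivAt_thetaChar a b 1 u hτ).fun_mul
    ((hasDerivAt_inv hu).comp_hasFDerivAt (u, τ) (hasFDerivAt_thetaChar a b 0 u hτ))
  refine (hquot.congr_of_eventuallyEq
    (hnear.mono fun p hp ↦ logDeriv_thetaChar a b p.1 hp)).congr_fderiv ?_
  rw [deriv_deriv_logDeriv_thetaChar a b hτ hu,
    (hasDerivAt_logDeriv_thetaChar a b hτ hu).deriv, logDeriv_thetaChar a b u hτ]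
  refine ContinuousLinearMap.ext fun q ↦ ?_
  simp only [Function.comp_apply, zero_add, Nat.reduceAdd, add_apply, smul_apply, smul_eq_mul]
  field_simp
  ring

end LogDeriv

lemma zeta1_eq_logDeriv_thetaChar (u τ : ℂ) :
    zeta1 u τ = logDeriv (thetaChar (1 / 2) (1 / 2) 0 · τ) u := by
  simp only [zeta1, theta1_eq_neg_thetaChar, deriv.fun_neg, neg_div_neg_eq, logDeriv_apply]

lemma zeta4_eq_logDeriv_thetaChar (u τ : ℂ) :
    zeta4 u τ = logDeriv (thetaChar 0 (1 / 2) 0 · τ) u := by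
  simp only [zeta4, theta4_eq_thetaChar, logDeriv_apply]

lemma hasFDerivAt_zeta1 {u τ : ℂ} (hτ : 0 < τ.im) (hu : theta1 u τ ≠ 0) :
    HasFDerivAt (fun p : ℂ × ℂ ↦ zeta1 p.1 p.2)
      (deriv (zeta1 · τ) u • .fst ℂ ℂ ℂ +
        ((deriv (deriv (zeta1 · τ)) u + 2 * zeta1 u τ * deriv (zeta1 · τ) u) /
            (4 * π * I)) • .snd ℂ ℂ ℂ) (u, τ) := by
  rw [theta1_eq_neg_thetaChar, neg_ne_zero] at hu
  simpa only [zeta1_eq_logDeriv_thetaChar] using!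
    hasFDerivAt_logDeriv_thetaChar (1 / 2) (1 / 2) hτ hu

lemma hasFDerivAt_zeta4 {u τ : ℂ} (hτ : 0 < τ.im) (hu : theta4 u τ ≠ 0) :
    HasFDerivAt (fun p : ℂ × ℂ ↦ zeta4 p.1 p.2)
      (deriv (zeta4 · τ) u • .fst ℂ ℂ ℂ +
        ((deriv (deriv (zeta4 · τ)) u + 2 * zeta4 u τ * deriv (zeta4 · τ) u) /
            (4 * π * I)) • .snd ℂ ℂ ℂ) (u, τ) := by
  rw [theta4_eq_thetaChar] at hu
  simpa only [zeta4_eq_logDeriv_thetaChar] using! hasFDerivAt_logDeriv_thetaChar 0 (1 / 2) hτ hu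

lemma hasFDerivAt_Sp {u τ : ℂ} (hτ : 0 < τ.im) (hu : IsThetaRegular u τ) :
    HasFDerivAt (fun p : ℂ × ℂ ↦ Sp p.1 p.2)
      (Spp u τ • .fst ℂ ℂ ℂ +
        ((Sppp u τ + Spp u τ * zeta1 u (τ / 2) - Sp u τ * wp1 u (τ / 2)) /
            (4 * π * I)) • .snd ℂ ℂ ℂ) (u, τ) := by
  have hζ₁ := analyticAt_zeta1 hτ hu.1
  have hζ₄ := analyticAt_zeta4 hτ hu.2
  have hderiv {v : ℂ} (hv : IsThetaRegular v τ) :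
      Spp v τ = deriv (zeta1 · τ) v - deriv (zeta4 · τ) v :=
    deriv_fun_sub (analyticAt_zeta1 hτ hv.1).differentiableAt
      (analyticAt_zeta4 hτ hv.2).differentiableAt
  have hderiv₂ : Sppp u τ = deriv (deriv (zeta1 · τ)) u - deriv (deriv (zeta4 · τ)) u :=
    (Filter.EventuallyEq.deriv_eq ((hu.eventually hτ).mono fun _ hv ↦ hderiv hv)).trans
      (deriv_fun_sub hζ₁.deriv.differentiableAt hζ₄.deriv.differentiableAt)
  have hwp : -wp1 u (τ / 2) = deriv (zeta1 · τ) u + deriv (zeta4 · τ) u := by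
    rw [wp1, neg_neg,
      Filter.EventuallyEq.deriv_eq ((hu.eventually hτ).mono fun _ hv ↦ zeta1_half hτ hv),
      deriv_fun_add hζ₁.differentiableAt hζ₄.differentiableAt]
  refine ((hasFDerivAt_zeta1 hτ hu.1).fun_sub (hasFDerivAt_zeta4 hτ hu.2)).congr_fderiv ?_
  rw [hderiv₂, hderiv hu, zeta1_half hτ hu, sub_eq_add_neg _ (Sp u τ * _), ← mul_neg, hwp, Sp]
  refine ContinuousLinearMap.ext fun q ↦ ?_
  simp only [sub_apply, add_apply, smul_apply, smul_eq_mul]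
  ring

/-! ### Evolution along the Gibbons–Tsarev flow -/

section Evolution

lemma hasFDerivAt_Sp_comp {E : Type*} [NormedAddCommGroup E] [NormedSpace ℝ E] {v τ : E → ℂ}
    {v' τ' : E →L[ℝ] ℂ} {x : E} (hv : HasFDerivAt v v' x) (hτ : HasFDerivAt τ τ' x)
    (hpos : 0 < (τ x).im) (hreg : IsThetaRegular (v x) (τ x)) :
    HasFDerivAt (fun y ↦ Sp (v y) (τ y))
      (Spp (v x) (τ x) • v' + ((Sppp (v x) (τ x) + Spp (v x) (τ x) * zeta1 (v x) (τ x / 2) -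
        Sp (v x) (τ x) * wp1 (v x) (τ x / 2)) / (4 * π * I)) • τ') x := by
  have h := HasFDerivAt.comp (f := fun y ↦ (v y, τ y)) x
    ((hasFDerivAt_Sp hpos hreg).restrictScalars ℝ) (hv.prodMk hτ)
  refine h.congr_fderiv ?_
  ext
  simp

variable {N : ℕ} {x : Fin N → ℝ}

lemma pdC_add {i : Fin N} {f g : (Fin N → ℝ) → ℂ} (hf : DifferentiableAt ℝ f x)
    (hg : DifferentiableAt ℝ g x) : pdC i (fun y ↦ f y + g y) x = pdC i f x + pdC i g x := by
  rw [pdC, fderiv_fun_add hf hg, add_apply, pdC, pdC]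

lemma pdC_mul {i : Fin N} {f g : (Fin N → ℝ) → ℂ} (hf : DifferentiableAt ℝ f x)
    (hg : DifferentiableAt ℝ g x) :
    pdC i (fun y ↦ f y * g y) x = pdC i f x * g x + f x * pdC i g x := by
  simp only [pdC, fderiv_fun_mul hf hg, add_apply, smul_apply, smul_eq_mul]
  ring

lemma differentiableAt_pdC {j : Fin N} {f : (Fin N → ℝ) → ℂ} (hf : ContDiffAt ℝ 2 f x) :
    DifferentiableAt ℝ (pdC j f) x :=
  ((hf.fderiv_right (m := 1) (by norm_num)).differentiableAt one_ne_zero).clm_apply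
    (differentiableAt_const _)

lemma pdC_Sp_of_pdC_eq {i : Fin N} {v τ : (Fin N → ℝ) → ℂ} {d : ℂ}
    (hv : DifferentiableAt ℝ v x) (hτ : DifferentiableAt ℝ τ x) (hpos : 0 < (τ x).im)
    (hv_reg : IsThetaRegular (v x) (τ x)) (hd_reg : IsThetaRegular d (τ x))
    (hvd_reg : IsThetaRegular (v x + d) (τ x))
    (hpdC : 4 * π * I * pdC i v x =
      (zeta1 d (τ x / 2) - zeta1 (v x + d) (τ x / 2)) * pdC i τ x) :
    4 * π * I * pdC i (fun y ↦ Sp (v y) (τ y)) x =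
      -(Sp (v x) (τ x) * wp1 d (τ x / 2) + Sp (v x + d) (τ x) * Spp d (τ x)) * pdC i τ x := by
  have hchain := hasFDerivAt_Sp_comp hv.hasFDerivAt hτ.hasFDerivAt hpos hv_reg
  rw [Sppp_add_eq_of_isThetaRegular hpos hv_reg hd_reg hvd_reg] at hchain
  simp only [pdC] at hpdC ⊢
  simp only [hchain.fderiv, add_apply, smul_apply, smul_eq_mul]
  field_simp
  linear_combination Spp (v x) (τ x) * hpdC

lemma pdC_Sp_mul_Sp_mul {i : Fin N} {v w τ f : (Fin N → ℝ) → ℂ} {d : ℂ}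
    (hv : DifferentiableAt ℝ v x) (hw : DifferentiableAt ℝ w x) (hτ : DifferentiableAt ℝ τ x)
    (hf : DifferentiableAt ℝ f x) (hpos : 0 < (τ x).im) (hd_reg : IsThetaRegular d (τ x))
    (hv_reg : IsThetaRegular (v x) (τ x)) (hvd_reg : IsThetaRegular (v x + d) (τ x))
    (hw_reg : IsThetaRegular (w x) (τ x)) (hwd_reg : IsThetaRegular (w x + d) (τ x))
    (hpdC_v : 4 * π * I * pdC i v x =
      (zeta1 d (τ x / 2) - zeta1 (v x + d) (τ x / 2)) * pdC i τ x)
    (hpdC_w : 4 * π * I * pdC i w x =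
      (zeta1 d (τ x / 2) - zeta1 (w x + d) (τ x / 2)) * pdC i τ x)
    (hpdC_f : 4 * π * I * pdC i f x = 2 * wp1 d (τ x / 2) * pdC i τ x * f x) :
    4 * π * I * pdC i (fun y ↦ Sp (v y) (τ y) * Sp (w y) (τ y) * f y) x =
      -(Sp (v x + d) (τ x) * Sp (w x) (τ x) + Sp (v x) (τ x) * Sp (w x + d) (τ x)) *
        Spp d (τ x) * pdC i τ x * f x := by
  have hSv := pdC_Sp_of_pdC_eq hv hτ hpos hv_reg hd_reg hvd_reg hpdC_v
  have hSw := pdC_Sp_of_pdC_eq hw hτ hpos hw_reg hd_reg hwd_reg hpdC_w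
  have hSv_diff := (hasFDerivAt_Sp_comp hv.hasFDerivAt hτ.hasFDerivAt hpos hv_reg).differentiableAt
  have hSw_diff := (hasFDerivAt_Sp_comp hw.hasFDerivAt hτ.hasFDerivAt hpos hw_reg).differentiableAt
  rw [pdC_mul (hSv_diff.fun_mul hSw_diff) hf, pdC_mul hSv_diff hSw_diff]
  linear_combination Sp (w x) (τ x) * f x * hSv + Sp (v x) (τ x) * f x * hSw +
    Sp (v x) (τ x) * Sp (w x) (τ x) * hpdC_f

theorem S_generates_conserved_densities_general
    {ξ : Fin N → (Fin N → ℝ) → ℂ} {u τ : (Fin N → ℝ) → ℂ} {i j : Fin N}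
    (hξj : DifferentiableAt ℝ (ξ j) x) (hu : DifferentiableAt ℝ u x)
    (hτ : DifferentiableAt ℝ τ x) (hτj : DifferentiableAt ℝ (pdC j τ) x) (hpos : 0 < (τ x).im)
    (hξi_reg : IsThetaRegular (ξ i x) (τ x)) (hξj_reg : IsThetaRegular (ξ j x) (τ x))
    (hsub_reg : IsThetaRegular (ξ i x - ξ j x) (τ x))
    (hui_reg : IsThetaRegular (u x + ξ i x) (τ x))
    (huj_reg : IsThetaRegular (u x + ξ j x) (τ x))
    (hSi : Sp (ξ i x) (τ x) ≠ 0) (hSj : Sp (ξ j x) (τ x) ≠ 0)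
    (hGT1 : pdC i (ξ j) x = 1 / (4 * π * I) *
      (zeta1 (ξ i x - ξ j x) (τ x / 2) - zeta1 (ξ i x) (τ x / 2)) * pdC i τ x)
    (hGT2 : pdC i (pdC j τ) x =
      1 / (2 * π * I) * wp1 (ξ i x - ξ j x) (τ x / 2) * pdC i τ x * pdC j τ x)
    (hLoewner : 4 * π * I * pdC i u x =
      (-zeta1 (u x + ξ i x) (τ x / 2) + zeta1 (ξ i x) (τ x / 2)) * pdC i τ x) :
    pdC i (fun y ↦ Sp (ξ j y) (τ y) * Sp (u y + ξ j y) (τ y) * pdC j τ y) x =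
      Gam ξ τ i j x * (Sp (ξ i x) (τ x) * Sp (u x + ξ i x) (τ x) * pdC i τ x) +
        Gam ξ τ j i x * (Sp (ξ j x) (τ x) * Sp (u x + ξ j x) (τ x) * pdC j τ x) := by
  have hξ_eq : ξ j x + (ξ i x - ξ j x) = ξ i x := by ring
  have hu_eq : u x + ξ j x + (ξ i x - ξ j x) = u x + ξ i x := by ring
  have hpdC_ξ : 4 * π * I * pdC i (ξ j) x =
      (zeta1 (ξ i x - ξ j x) (τ x / 2) - zeta1 (ξ i x) (τ x / 2)) * pdC i τ x := by
    rw [hGT1]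
    field_simp
  have hpdC_u : 4 * π * I * pdC i (fun y ↦ u y + ξ j y) x =
      (zeta1 (ξ i x - ξ j x) (τ x / 2) - zeta1 (u x + ξ i x) (τ x / 2)) * pdC i τ x := by
    rw [pdC_add hu hξj]
    linear_combination hLoewner + hpdC_ξ
  have hpdC_τ : 4 * π * I * pdC i (pdC j τ) x =
      2 * wp1 (ξ i x - ξ j x) (τ x / 2) * pdC i τ x * pdC j τ x := by
    rw [hGT2]
    field_simp
    norm_num
  have hprod := pdC_Sp_mul_Sp_mul hξj (hu.fun_add hξj) hτ hτj hpos hsub_reg hξj_reg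
    (by rwa [hξ_eq]) huj_reg (by rwa [hu_eq]) (by rwa [hξ_eq]) (by rwa [hu_eq]) hpdC_τ
  rw [hξ_eq, hu_eq] at hprod
  have hSpp : Spp (ξ j x - ξ i x) (τ x) = Spp (ξ i x - ξ j x) (τ x) := by rw [← Spp_neg, neg_sub]
  have hne : (4 * π * I : ℂ) ≠ 0 := by simp [Real.pi_ne_zero]
  rw [Gam, Gam, hSpp, eq_div_of_mul_eq hne ((mul_comm _ _).trans hprod)]
  field_simp
  ring

end Evolution

/-- S(u(z)) generates conserved densities (equation (cq3)): along solutions of the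
elliptic Löwner and Gibbons–Tsarev systems,
∂/∂λ_i [S'(ξ_j)S'(u+ξ_j) ∂τ/∂λ_j] = Γ_{ij} S'(ξ_i)S'(u+ξ_i) ∂τ/∂λ_i
  + Γ_{ji} S'(ξ_j)S'(u+ξ_j) ∂τ/∂λ_j,
i.e. ∂²S(u)/∂λ_i∂λ_j = Γ_{ij} ∂S(u)/∂λ_i + Γ_{ji} ∂S(u)/∂λ_j. -/
theorem S_generates_conserved_densities
    (N : ℕ) (U : Set (Fin N → ℝ)) (hU : IsOpen U)
    (ξ : Fin N → (Fin N → ℝ) → ℂ) (τ : (Fin N → ℝ) → ℂ)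
    (hξC2 : ∀ i, ContDiffOn ℝ 2 (ξ i) U)
    (hτC2 : ContDiffOn ℝ 2 τ U)
    (hup : ∀ x ∈ U, 0 < (τ x).im)
    -- the elliptic Gibbons–Tsarev system
    (hGT1 : ∀ j k : Fin N, j ≠ k → ∀ x ∈ U,
      pdC j (ξ k) x = 1 / (4 * (Real.pi : ℂ) * Complex.I)
        * (zeta1 (ξ j x - ξ k x) (τ x / 2) - zeta1 (ξ j x) (τ x / 2)) * pdC j τ x)
    (hGT2 : ∀ j k : Fin N, j ≠ k → ∀ x ∈ U,
      pdC k (pdC j τ) x = 1 / (2 * (Real.pi : ℂ) * Complex.I)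
        * wp1 (ξ k x - ξ j x) (τ x / 2) * pdC k τ x * pdC j τ x)
    -- nonvanishing of the theta-function values appearing in denominators
    (hnz1 : ∀ i, ∀ x ∈ U, theta1 (ξ i x) (τ x) ≠ 0)
    (hnz2 : ∀ i, ∀ x ∈ U, theta4 (ξ i x) (τ x) ≠ 0)
    (hnz3 : ∀ i, ∀ x ∈ U, theta1 (ξ i x) (τ x / 2) ≠ 0)
    (hnz4 : ∀ i j : Fin N, i ≠ j → ∀ x ∈ U, theta1 (ξ i x - ξ j x) (τ x) ≠ 0)
    (hnz5 : ∀ i j : Fin N, i ≠ j → ∀ x ∈ U, theta4 (ξ i x - ξ j x) (τ x) ≠ 0)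
    (hnz6 : ∀ i j : Fin N, i ≠ j → ∀ x ∈ U, theta1 (ξ i x - ξ j x) (τ x / 2) ≠ 0)
    (hnzS : ∀ i, ∀ x ∈ U, Sp (ξ i x) (τ x) ≠ 0)
    -- the function u and the elliptic Löwner equations
    (u : (Fin N → ℝ) → ℂ)
    (huC2 : ContDiffOn ℝ 2 u U)
    (hLoewner : ∀ j : Fin N, ∀ x ∈ U,
      4 * (Real.pi : ℂ) * Complex.I * pdC j u x
        = (-zeta1 (u x + ξ j x) (τ x / 2) + zeta1 (ξ j x) (τ x / 2)) * pdC j τ x)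
    (hnz7 : ∀ i, ∀ x ∈ U, theta1 (u x + ξ i x) (τ x) ≠ 0)
    (hnz8 : ∀ i, ∀ x ∈ U, theta4 (u x + ξ i x) (τ x) ≠ 0)
    (hnz9 : ∀ i, ∀ x ∈ U, theta1 (u x + ξ i x) (τ x / 2) ≠ 0) :
    ∀ i j : Fin N, i ≠ j → ∀ x ∈ U,
      pdC i (fun y => Sp (ξ j y) (τ y) * Sp (u y + ξ j y) (τ y) * pdC j τ y) x
        = Gam ξ τ i j x * (Sp (ξ i x) (τ x) * Sp (u x + ξ i x) (τ x) * pdC i τ x)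
          + Gam ξ τ j i x * (Sp (ξ j x) (τ x) * Sp (u x + ξ j x) (τ x) * pdC j τ x) := by
  intro i j hij x hx
  have hnhds := hU.mem_nhds hx
  exact S_generates_conserved_densities_general
    (((hξC2 j).contDiffAt hnhds).differentiableAt two_ne_zero)
    ((huC2.contDiffAt hnhds).differentiableAt two_ne_zero)
    ((hτC2.contDiffAt hnhds).differentiableAt two_ne_zero)
    (differentiableAt_pdC (hτC2.contDiffAt hnhds)) (hup x hx)
    ⟨hnz1 i x hx, hnz2 i x hx⟩ ⟨hnz1 j x hx, hnz2 j x hx⟩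
    ⟨hnz4 i j hij x hx, hnz5 i j hij x hx⟩ ⟨hnz7 i x hx, hnz8 i x hx⟩ ⟨hnz7 j x hx, hnz8 j x hx⟩
    (hnzS i x hx) (hnzS j x hx) (hGT1 i j hij x hx) (hGT2 j i hij.symm x hx) (hLoewner i x hx)
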